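/- arXiv:2008.01444 — 4 statements merged into one kernel-verified Lean document; each statement's English description precedes it below -/
import Mathlib

section
/- Let (Λ, Σ) be a measurable space, let κ be a Markov (probability) kernel from Λ to itself, let μ be a probability measure on Λ, and let p : Λ → ℝ be a bounded measurable function such that p(λ) = ∫ p dκ(λ) for μ-almost every λ. Let ν := μ.bind κ. Then Var_μ(p) ≤ Var_ν(p), i.e. ∫ p² dμ − (∫ p dμ)² ≤ ∫ p² dν − (∫ p dν)². -/
open MeasureTheory ProbabilityTheory

/-! The Markov operator `f ↦ (x ↦ ∫ y, f y ∂κ x)` turns the mean under `κ ∘ₘ μ` into the mean under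
`μ` and fixes constants. By Jensen's inequality on each fibre `κ x` it contracts the `L²` norm, so
applying it to `f` minus the mean of `f` shows that it does not increase the variance. An invariant
`p` is its own image. -/

section MarkovOperator

variable {α β E : Type*} [MeasurableSpace α] [MeasurableSpace β]
  [NormedAddCommGroup E] [NormedSpace ℝ E] {κ : Kernel α β} {μ : Measure α}

theorem integral_measure_comp {f : β → E} (hf : Integrable f (κ ∘ₘ μ)) :
    ∫ y, f y ∂(κ ∘ₘ μ) = ∫ x, ∫ y, f y ∂κ x ∂μ := by
  rw [Measure.comp_eq_comp_const_apply] at hf ⊢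
  rw [Kernel.integral_comp hf, Kernel.const_apply]

theorem enorm_integral_rpow_le_lintegral (P : Measure β) [IsProbabilityMeasure P] (f : β → E)
    {r : ℝ} (hr : 1 ≤ r) : ‖∫ y, f y ∂P‖ₑ ^ r ≤ ∫⁻ y, ‖f y‖ₑ ^ r ∂P := by
  have hr₀ : 0 < r := one_pos.trans_le hr
  by_cases hf : AEStronglyMeasurable f P
  · rw [← ENNReal.le_rpow_inv_iff hr₀, ← one_div]
    calc ‖∫ y, f y ∂P‖ₑ ≤ ∫⁻ y, ‖f y‖ₑ ∂P := enorm_integral_le_lintegral_enorm f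
      _ = eLpNorm' f 1 P := by simp [eLpNorm'_eq_lintegral_enorm]
      _ ≤ eLpNorm' f r P := eLpNorm'_le_eLpNorm'_of_exponent_le one_pos hr P hf
  · simp [integral_non_aestronglyMeasurable hf, hr₀]

theorem lintegral_enorm_integral_rpow_le [IsMarkovKernel κ] {f : β → E}
    (hf : AEStronglyMeasurable f (κ ∘ₘ μ)) {r : ℝ} (hr : 1 ≤ r) :
    ∫⁻ x, ‖∫ y, f y ∂κ x‖ₑ ^ r ∂μ ≤ ∫⁻ y, ‖f y‖ₑ ^ r ∂(κ ∘ₘ μ) := by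
  rw [Measure.lintegral_bind κ.aemeasurable (hf.enorm.pow_const r)]
  exact lintegral_mono fun x ↦ enorm_integral_rpow_le_lintegral (κ x) f hr

theorem evariance_integral_kernel_le [IsMarkovKernel κ] {f : β → ℝ}
    (hf : Integrable f (κ ∘ₘ μ)) :
    eVar[fun x ↦ ∫ y, f y ∂κ x; μ] ≤ eVar[f; κ ∘ₘ μ] := by
  set m := ∫ y, f y ∂(κ ∘ₘ μ) with hm
  have h_center : ∀ᵐ x ∂μ, ∫ y, f y ∂κ x - m = ∫ y, (f y - m) ∂κ x := by
    filter_upwards [Measure.ae_integrable_of_integrable_comp hf] with x hx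
    simp [integral_sub hx (integrable_const m)]
  have h_meas : AEStronglyMeasurable (fun y ↦ f y - m) (κ ∘ₘ μ) :=
    hf.aestronglyMeasurable.sub aestronglyMeasurable_const
  calc eVar[fun x ↦ ∫ y, f y ∂κ x; μ]
    _ = ∫⁻ x, ‖∫ y, f y ∂κ x - m‖ₑ ^ 2 ∂μ := by rw [evariance, hm, integral_measure_comp hf]
    _ = ∫⁻ x, ‖∫ y, (f y - m) ∂κ x‖ₑ ^ 2 ∂μ :=
      lintegral_congr_ae <| h_center.mono fun x hx ↦ by simp only [hx]
    _ ≤ ∫⁻ y, ‖f y - m‖ₑ ^ 2 ∂(κ ∘ₘ μ) := by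
      simpa only [ENNReal.rpow_two] using lintegral_enorm_integral_rpow_le h_meas one_le_two

theorem variance_integral_kernel_le [IsMarkovKernel κ] [IsFiniteMeasure μ] {f : β → ℝ}
    (hf : MemLp f 2 (κ ∘ₘ μ)) :
    Var[fun x ↦ ∫ y, f y ∂κ x; μ] ≤ Var[f; κ ∘ₘ μ] :=
  ENNReal.toReal_mono (evariance_ne_top hf)
    (evariance_integral_kernel_le (hf.integrable one_le_two))

end MarkovOperator

theorem unitary_invariance_dispersion_inequality_general
    {Λ Ω : Type*} [MeasurableSpace Λ] [MeasurableSpace Ω]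
    (κ : Kernel Λ Ω) [IsMarkovKernel κ] (μ : Measure Λ) [IsFiniteMeasure μ]
    {p : Λ → ℝ} {q : Ω → ℝ} (hq : MemLp q 2 (κ ∘ₘ μ))
    (hpq : ∀ᵐ lam ∂μ, p lam = ∫ x, q x ∂(κ lam)) :
    Var[p; μ] ≤ Var[q; κ ∘ₘ μ] :=
  (variance_congr hpq).trans_le (variance_integral_kernel_le hq)

/-- Dispersion inequality: if a bounded measurable response function is `μ`-almost surely
invariant under averaging through a Markov kernel, then its variance under `μ` is at most
its variance under the transformed measure `μ.bind κ`. -/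
theorem unitary_invariance_dispersion_inequality
    {Λ : Type*} [MeasurableSpace Λ]
    (κ : Kernel Λ Λ) [IsMarkovKernel κ]
    (μ : Measure Λ) [IsProbabilityMeasure μ]
    (p : Λ → ℝ) (hp : Measurable p) (C : ℝ) (hC : ∀ x, |p x| ≤ C)
    (hinv : ∀ᵐ lam ∂μ, p lam = ∫ x, p x ∂(κ lam))
    (ν : Measure Λ) (hν : ν = μ.bind (fun lam => κ lam)) :
    ∫ lam, (p lam) ^ 2 ∂μ - (∫ lam, p lam ∂μ) ^ 2
      ≤ ∫ x, (p x) ^ 2 ∂ν - (∫ x, p x ∂ν) ^ 2 := by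
  obtain rfl : ν = κ ∘ₘ μ := hν
  have h_memLp (P : Measure Λ) [IsProbabilityMeasure P] : MemLp p 2 P :=
    .of_bound hp.aestronglyMeasurable C (.of_forall hC)
  simpa only [variance_eq_sub (h_memLp _), Pi.pow_apply] using
    unitary_invariance_dispersion_inequality_general κ μ (h_memLp _) hinv
end

section
/- Let (Λ, Σ) and (Λ′, Σ′) be measurable spaces, μ a probability measure on Λ, γ₁ a Markov kernel from Λ to Λ′, γ₂ a Markov kernel from Λ′ to Λ′, f : Λ′ → ℝ bounded measurable, and g : Λ → ℝ bounded measurable. Suppose (ancilla independence) g(λ) = ∫ f dγ₁(λ) for every λ ∈ Λ, and (unitary invariance) f(λ′) = ∫ f dγ₂(λ′) for (μ.bind γ₁)-almost every λ′. Then ∫ | g(λ) − ∫ (∫ f dγ₂(λ′)) γ₁(λ)(dλ′) | dμ(λ) = 0; that is, g agrees μ-almost surely with the average of f through the composed kernel γ₂ ∘ γ₁. -/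
open MeasureTheory ProbabilityTheory

section

variable {Λ Λ' E : Type*} [MeasurableSpace Λ] [MeasurableSpace Λ']
  [NormedAddCommGroup E] [NormedSpace ℝ E]

theorem integral_kernel_ae_eq_of_ae_eq_bind {μ : Measure Λ} {κ : Kernel Λ Λ'} {f h : Λ' → E}
    (hfh : f =ᵐ[μ.bind κ] h) :
    (fun lam ↦ ∫ x, f x ∂(κ lam)) =ᵐ[μ] fun lam ↦ ∫ x, h x ∂(κ lam) :=
  (Measure.ae_ae_of_ae_comp hfh).mono fun _ ↦ integral_congr_ae

theorem ancilla_and_unitary_invariance_composition_general [CompleteSpace E]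
    {μ : Measure Λ} {γ₁ : Kernel Λ Λ'} {γ₂ : Kernel Λ' Λ'} {f : Λ' → E} {g : Λ → E}
    (hf : ∀ᵐ lam ∂μ, Integrable f ((γ₂ ∘ₖ γ₁) lam))
    (hAncilla : ∀ᵐ lam ∂μ, g lam = ∫ x, f x ∂(γ₁ lam))
    (hUnitary : ∀ᵐ lam' ∂(μ.bind γ₁), f lam' = ∫ x, f x ∂(γ₂ lam')) :
    ∀ᵐ lam ∂μ, g lam = ∫ x, f x ∂((γ₂ ∘ₖ γ₁) lam) := by
  filter_upwards [hf, hAncilla, integral_kernel_ae_eq_of_ae_eq_bind hUnitary]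
    with lam hf_int hg hγ₁
  calc g lam = ∫ x, f x ∂(γ₁ lam) := hg
    _ = ∫ lam', ∫ x, f x ∂(γ₂ lam') ∂(γ₁ lam) := hγ₁
    _ = ∫ x, f x ∂((γ₂ ∘ₖ γ₁) lam) := (Kernel.integral_comp hf_int).symm

end

/-- Combining ancilla independence and unitary invariance: the response function `g` of
the initial system agrees `μ`-almost surely with the average of `f` through the composed
kernel `γ₂ ∘ γ₁`. -/
theorem ancilla_and_unitary_invariance_composition
    {Λ Λ' : Type*} [MeasurableSpace Λ] [MeasurableSpace Λ']
    (μ : Measure Λ) [IsProbabilityMeasure μ]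
    (γ₁ : Kernel Λ Λ') [IsMarkovKernel γ₁]
    (γ₂ : Kernel Λ' Λ') [IsMarkovKernel γ₂]
    (f : Λ' → ℝ) (hf : Measurable f) (Cf : ℝ) (hCf : ∀ x, |f x| ≤ Cf)
    (g : Λ → ℝ) (hg : Measurable g) (Cg : ℝ) (hCg : ∀ x, |g x| ≤ Cg)
    (hAncilla : ∀ lam : Λ, g lam = ∫ x, f x ∂(γ₁ lam))
    (hUnitary : ∀ᵐ lam' ∂(μ.bind (fun lam => γ₁ lam)), f lam' = ∫ x, f x ∂(γ₂ lam')) :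
    ∫ lam, |g lam - ∫ lam', (∫ x, f x ∂(γ₂ lam')) ∂(γ₁ lam)| ∂μ = 0 := by
  have hf_int (lam : Λ) : Integrable f ((γ₂ ∘ₖ γ₁) lam) :=
    .of_bound hf.aestronglyMeasurable Cf (ae_of_all _ hCf)
  have hg_comp : ∀ᵐ lam ∂μ, g lam = ∫ x, f x ∂((γ₂ ∘ₖ γ₁) lam) :=
    ancilla_and_unitary_invariance_composition_general
      (ae_of_all _ hf_int) (ae_of_all _ hAncilla) hUnitary
  simp only [← Kernel.integral_comp (hf_int _)]
  exact integral_eq_zero_of_ae (hg_comp.mono fun lam h ↦ by simp [h])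
end

section
/- Let (Λ, Σ) be a measurable space, μ and ν probability measures on Λ, and p, q : Λ → ℝ measurable functions. Suppose that for every measurable f : Λ → ℝ the following biconditional holds: p = f μ-almost everywhere if and only if q = f ν-almost everywhere. Then: (i) p = q μ-almost everywhere and p = q ν-almost everywhere; and (ii) for every measurable set Δ with μ(Δ) = 0, one has ν(Δ ∩ {λ : q(λ) ≠ 0}) = 0. -/
/-!
On a `μ`-null set `Δ` the response `p` may be redefined to be any constant `c` without leaving its
`μ`-class, so the criterion forces `q = c` `ν`-almost everywhere on `Δ`. Two different constants
leave no room for `Δ` to have positive `ν`-measure, hence `ν ≪ μ`. The criterion is symmetric, so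
`μ` and `ν` have the same null sets; a measurable version of `p` is then a version of `q` for both
measures.
-/

open MeasureTheory

section

variable {Λ E : Type*} [MeasurableSpace Λ] [MeasurableSpace E] {μ ν : Measure Λ} {p q : Λ → E}

/-- Landsman's criterion for the equality of the λ-probabilities `p` and `q`, prepared according to
`μ` and `ν`: the measurable versions of `p` with respect to `μ` are exactly the measurable versions
of `q` with respect to `ν`. The responses take values in an arbitrary measurable space. -/
def LandsmanCriterion (μ ν : Measure Λ) (p q : Λ → E) : Prop :=
  ∀ f : Λ → E, Measurable f → (p =ᵐ[μ] f ↔ q =ᵐ[ν] f)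

namespace LandsmanCriterion

theorem symm (h : LandsmanCriterion μ ν p q) : LandsmanCriterion ν μ q p :=
  fun f hf => (h f hf).symm

theorem aemeasurable_right (h : LandsmanCriterion μ ν p q) (hp : AEMeasurable p μ) :
    AEMeasurable q ν :=
  ⟨hp.mk p, hp.measurable_mk, (h _ hp.measurable_mk).1 hp.ae_eq_mk⟩

theorem ae_eq_const_of_measure_eq_zero (h : LandsmanCriterion μ ν p q) (hp : AEMeasurable p μ)
    {Δ : Set Λ} (hΔ : MeasurableSet Δ) (hμΔ : μ Δ = 0) (c : E) :
    ∀ᵐ x ∂ν, x ∈ Δ → q x = c := by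
  classical
  let f : Λ → E := Δ.piecewise (fun _ => c) (hp.mk p)
  have hf : Measurable f := measurable_const.piecewise hΔ hp.measurable_mk
  have hpf : p =ᵐ[μ] f := by
    filter_upwards [hp.ae_eq_mk, measure_eq_zero_iff_ae_notMem.1 hμΔ] with x hx hxΔ
    exact hx.trans (Set.piecewise_eq_of_notMem _ _ _ hxΔ).symm
  filter_upwards [(h f hf).1 hpf] with x hx hxΔ
  exact hx.trans (Set.piecewise_eq_of_mem _ _ _ hxΔ)

theorem absolutelyContinuous [Nontrivial E] (h : LandsmanCriterion μ ν p q)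
    (hp : AEMeasurable p μ) : ν ≪ μ := by
  refine Measure.AbsolutelyContinuous.mk fun Δ hΔ hμΔ => ?_
  obtain ⟨a, b, hab⟩ := exists_pair_ne E
  rw [measure_eq_zero_iff_ae_notMem]
  filter_upwards [h.ae_eq_const_of_measure_eq_zero hp hΔ hμΔ a,
    h.ae_eq_const_of_measure_eq_zero hp hΔ hμΔ b] with x ha hb hxΔ
  exact hab ((ha hxΔ).symm.trans (hb hxΔ))

theorem ae_eq_ae [Nontrivial E] (h : LandsmanCriterion μ ν p q) (hp : AEMeasurable p μ) :
    ae μ = ae ν :=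
  le_antisymm (h.symm.absolutelyContinuous (h.aemeasurable_right hp)).ae_le
    (h.absolutelyContinuous hp).ae_le

theorem ae_eq [Nontrivial E] (h : LandsmanCriterion μ ν p q) (hp : AEMeasurable p μ) :
    p =ᵐ[μ] q := by
  have hq : q =ᵐ[ν] hp.mk p := (h _ hp.measurable_mk).1 hp.ae_eq_mk
  rw [← h.ae_eq_ae hp] at hq
  exact hp.ae_eq_mk.trans hq.symm

end LandsmanCriterion

theorem landsman_criterion_consequences_general [Nontrivial E] (hp : AEMeasurable p μ) :
    LandsmanCriterion μ ν p q ↔ p =ᵐ[μ] q ∧ ae μ = ae ν := by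
  refine ⟨fun h => ⟨h.ae_eq hp, h.ae_eq_ae hp⟩, fun ⟨hpq, hae⟩ f _ => ?_⟩
  rw [← hae]
  exact ⟨hpq.symm.trans, hpq.trans⟩

end

/-- Landsman's criterion for equality of λ-probabilities forces the two response
functions to agree almost surely with respect to both preparation measures, and forces
the second measure to assign no weight to `μ`-null sets where the response is nonzero. -/
theorem landsman_criterion_consequences
    {Λ : Type*} [MeasurableSpace Λ]
    (μ ν : Measure Λ) [IsProbabilityMeasure μ] [IsProbabilityMeasure ν]
    (p q : Λ → ℝ) (hp : Measurable p) (hq : Measurable q)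
    (hcrit : ∀ f : Λ → ℝ, Measurable f → ((p =ᵐ[μ] f) ↔ (q =ᵐ[ν] f))) :
    (p =ᵐ[μ] q) ∧ (p =ᵐ[ν] q)
      ∧ ∀ Δ : Set Λ, MeasurableSet Δ → μ Δ = 0 →
          ν (Δ ∩ {lam | q lam ≠ 0}) = 0 := by
  obtain ⟨hpq, hae⟩ := (landsman_criterion_consequences_general hp.aemeasurable).1 hcrit
  exact ⟨hpq, hae ▸ hpq, fun Δ _ hμΔ =>
    measure_mono_null Set.inter_subset_left (Measure.ae_le_iff_absolutelyContinuous.1 hae.ge hμΔ)⟩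
end

section
/- Let n, ñ and M be positive natural numbers. Then Σ_{j=1}^{n} Σ_{ĵ=1}^{ñ} Σ_{m=1}^{M} 1/√((j + (m−1)·n)·(ĵ + (m−1)·ñ)) ≥ √(n·ñ) · ( Σ_{k=1}^{n·M} 1/k − Real.log n ). -/
/-!
Each factor `j + m * n` with `j ≤ n` is at most `(m + 1) * n`, so each of the `n * n'` inner sums is
at least `H_M / √(n * n')`, where `H_M` is the `M`-th harmonic number. The sequence `H_k - log k` is
decreasing (towards the Euler–Mascheroni constant), and comparing its terms at `M` and `n * M` gives
`H_M ≥ H_{n * M} - log n`.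
-/

open Finset Real

section Harmonic

lemma cast_harmonic_eq_sum_one_div {K : Type*} [DivisionRing K] [CharZero K] (n : ℕ) :
    (harmonic n : K) = ∑ k ∈ range n, (1 : K) / (k + 1) := by
  simp [harmonic]

lemma harmonic_sub_log_le_of_le {m n : ℕ} (hm : 0 < m) (hmn : m ≤ n) :
    (harmonic n : ℝ) - log n ≤ harmonic m - log m := by
  have hanti := strictAnti_eulerMascheroniSeq'.antitone hmn
  simpa only [eulerMascheroniSeq', hm.ne', (hm.trans_le hmn).ne', if_false] using hanti

lemma harmonic_mul_sub_log_le {n m : ℕ} (hn : 0 < n) (hm : 0 < m) :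
    (harmonic (n * m) : ℝ) - log n ≤ harmonic m := by
  have hle := harmonic_sub_log_le_of_le hm (Nat.le_mul_of_pos_left m hn)
  rw [Nat.cast_mul, log_mul (by positivity) (by positivity)] at hle
  linarith

end Harmonic

section SqrtBound

variable {a b x y : ℝ}

lemma sqrt_add_mul_mul_add_mul_le {t : ℝ} (ha : 0 ≤ a) (hxa : x ≤ a) (hy : 0 ≤ y) (hyb : y ≤ b)
    (ht : 0 ≤ t) : √((x + t * a) * (y + t * b)) ≤ √(a * b) * (t + 1) := by
  have hb : 0 ≤ b := hy.trans hyb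
  calc √((x + t * a) * (y + t * b))
      ≤ √((a + t * a) * (b + t * b)) := by gcongr
    _ = √(a * b * (t + 1) ^ 2) := by ring_nf
    _ = √(a * b) * (t + 1) := by rw [sqrt_mul (by positivity), sqrt_sq (by positivity)]

lemma harmonic_div_sqrt_le_sum_one_div_sqrt (hx : 0 < x) (hxa : x ≤ a) (hy : 0 < y) (hyb : y ≤ b)
    (M : ℕ) :
    harmonic M / √(a * b) ≤ ∑ m ∈ range M, 1 / √((x + m * a) * (y + m * b)) := by
  have ha : 0 < a := hx.trans_le hxa
  have hb : 0 < b := hy.trans_le hyb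
  rw [cast_harmonic_eq_sum_one_div, sum_div]
  refine sum_le_sum fun m _ ↦ ?_
  rw [div_div, mul_comm]
  exact one_div_le_one_div_of_le (by positivity)
    (sqrt_add_mul_mul_add_mul_le ha.le hxa hy.le hyb m.cast_nonneg)

lemma card_mul_card_div_sqrt_mul_harmonic_le_sum {ι κ : Type*} {s : Finset ι} {t : Finset κ}
    {u : ι → ℝ} {v : κ → ℝ} (hu : ∀ i ∈ s, u i ∈ Set.Ioc 0 a) (hv : ∀ j ∈ t, v j ∈ Set.Ioc 0 b)
    (M : ℕ) :
    (#s * #t : ℝ) / √(a * b) * harmonic M ≤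
      ∑ i ∈ s, ∑ j ∈ t, ∑ m ∈ range M, 1 / √((u i + m * a) * (v j + m * b)) := by
  calc (#s * #t : ℝ) / √(a * b) * harmonic M
      = ∑ _i ∈ s, ∑ _j ∈ t, harmonic M / √(a * b) := by
        simp only [sum_const, nsmul_eq_mul]
        ring
    _ ≤ _ := sum_le_sum fun i hi ↦ sum_le_sum fun j hj ↦
        harmonic_div_sqrt_le_sum_one_div_sqrt (hu i hi).1 (hu i hi).2 (hv j hj).1 (hv j hj).2 M

end SqrtBound

/-- Embezzlement double-sum lower bound from the proof of the extended
equiprobability theorem. -/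
theorem embezzlement_double_sum_lower_bound
    (n n' M : ℕ) (hn : 0 < n) (hn' : 0 < n') (hM : 0 < M) :
    ∑ j ∈ Finset.range n, ∑ j' ∈ Finset.range n', ∑ m ∈ Finset.range M,
        (1 : ℝ) / Real.sqrt ((((j : ℝ) + 1) + m * n) * (((j' : ℝ) + 1) + m * n'))
      ≥ Real.sqrt ((n : ℝ) * n') *
          ((∑ k ∈ Finset.range (n * M), (1 : ℝ) / (k + 1)) - Real.log n) := by
  have succ_mem_Ioc (N : ℕ) : ∀ j ∈ range N, (j + 1 : ℝ) ∈ Set.Ioc (0 : ℝ) N := fun j hj ↦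
    ⟨by positivity, by exact_mod_cast mem_range.1 hj⟩
  calc √((n : ℝ) * n') * ((∑ k ∈ range (n * M), (1 : ℝ) / (k + 1)) - log n)
      = √((n : ℝ) * n') * (harmonic (n * M) - log n) := by rw [cast_harmonic_eq_sum_one_div]
    _ ≤ √((n : ℝ) * n') * harmonic M := by
        gcongr
        exact harmonic_mul_sub_log_le hn hM
    _ = (#(range n) * #(range n') : ℝ) / √((n : ℝ) * n') * harmonic M := by
        rw [card_range, card_range, div_sqrt]
    _ ≤ _ := card_mul_card_div_sqrt_mul_harmonic_le_sum (succ_mem_Ioc n) (succ_mem_Ioc n') M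
end
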